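/- (Theorem on Sums / Ishii's Lemma.) Let Ω_i ⊆ ℝ^{n_i} be bounded open and u_i : Ω̄_i → ℝ continuous for 1 ≤ i ≤ k. Set N := n₁ + ⋯ + n_k and define u(x₁,…,x_k) := u₁(x₁) + ⋯ + u_k(x_k) on Ω̄₁ × ⋯ × Ω̄_k. Suppose (p₁,…,p_k, X) ∈ J²⁺u(x) for some x = (x₁,…,x_k) ∈ Ω₁ × ⋯ × Ω_k, where X ∈ Sym(N). Then for each ε > 0 there exist matrices X_i ∈ Sym(n_i) such that (p_i, X_i) ∈ J̄²⁺u_i(x_i) for each i, and the block-diagonal matrix diag(X₁,…,X_k) satisfies −(1/ε + ‖X‖) I_N ≤ diag(X₁,…,X_k) ≤ X + εX² in Sym(N), where ‖X‖ := max_{|ξ|=1} |⟨Xξ,ξ⟩| is the operator norm of X. -/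

import Mathlib

/-!
The sum is reduced to `vᵢ(ζ) = uᵢ(xᵢ + ζ) - uᵢ(xᵢ) - ⟪Pᵢ, ζ⟫` on a small ball, so that
`∑ vᵢ(zᵢ) ≤ ½⟪Xz, z⟫ + (η/2)‖z‖²`. Let `wᵢ` be the sup-convolution of `vᵢ` with parameter
`l = 1/ε + ‖X‖ + η`. With `Y = X + η` and `B = Y + εY² + η`, completing the square gives
`∑ wᵢ(xᵢ) ≤ ½⟪Bx, x⟫ - (η/2)‖x‖²`. Hence for every small slope `p` the sum of the `wᵢ` is
touched from above, at a point `x` near the origin, by a quadratic with Hessian `B` and gradient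
`q = Bx + p` (`exists_contact_point`).

Second derivatives are produced without Alexandrov's theorem. The inf-convolution `Eᵢ` of `wᵢ`
with parameter `m > l` (Lasry–Lions regularisation, `exists_lasryLions`) has a Lipschitz gradient
`Gᵢ` and second derivatives bounded below by `-r`, where `1/r = 1/l - 1/m`; here
`r = 1/ε + ‖X‖ + 2η`. At `y = x + q/m` the full gradient is `G y = q`, so that
`p = S y := G y - B(y - G y/m)`, where `S` is Lipschitz. By Rademacher's theorem `G` is
differentiable almost everywhere, and Lipschitz maps preserve null sets, so some arbitrarily small
`p` forces `G` to be differentiable at `y` (`exists_small_regular_value`). The derivatives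
`Zᵢ = DGᵢ(yᵢ)` are symmetric, satisfy `-r ≤ Zᵢ` and `diag(Zᵢ) ≤ B`, and, since `vᵢ` is touched
from above at `zᵢ = xᵢ + qᵢ/l` by a translate of `Eᵢ` (`contact_facts`), they give superjets
`(qᵢ, Zᵢ)` of `vᵢ` at `zᵢ` (`sums_core`). As `η → 0` the `Zᵢ` stay bounded, and a convergent
subsequence yields the matrices `Xᵢ`.
-/

open scoped RealInnerProductSpace
open Filter

noncomputable section

/-- Second-order super-jet `J²⁺v(x)` relative to a set `S` in an inner product space,
with the Hessian `X` represented as a self-adjoint continuous linear operator: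
`(p,X) ∈ J²⁺v(x)` iff `v(x+z) ≤ v(x) + ⟨p,z⟩ + ½⟨Xz,z⟩ + o(|z|²)` as `z → 0` in `S`. -/
def J2plusOp {H : Type*} [NormedAddCommGroup H] [InnerProductSpace ℝ H]
    (S : Set H) (v : H → ℝ) (x p : H) (X : H →L[ℝ] H) : Prop :=
  (∀ z w : H, ⟪X z, w⟫ = ⟪z, X w⟫) ∧
  ∀ ε > (0 : ℝ), ∃ δ > (0 : ℝ), ∀ z : H, ‖z‖ < δ → x + z ∈ S →
    v (x + z) ≤ v x + ⟪p, z⟫ + (1 / 2) * ⟪X z, z⟫ + ε * ‖z‖ ^ 2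

/-- The jet closure `J̄²⁺v(x)`: limits of jets at nearby points. -/
def J2plusBarOp {H : Type*} [NormedAddCommGroup H] [InnerProductSpace ℝ H]
    (S : Set H) (v : H → ℝ) (x p : H) (X : H →L[ℝ] H) : Prop :=
  ∃ (xs ps : ℕ → H) (Xs : ℕ → H →L[ℝ] H),
    (∀ m, xs m ∈ S ∧ J2plusOp S v (xs m) (ps m) (Xs m)) ∧
    Tendsto xs atTop (nhds x) ∧ Tendsto ps atTop (nhds p) ∧ Tendsto Xs atTop (nhds X)

section Generic
variable {V : Type*} [NormedAddCommGroup V] [InnerProductSpace ℝ V]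

/-! ### Lipschitz maps and quadratic forms -/

/-- By Rademacher's theorem `G` is differentiable off a null set, and the Lipschitz map `S` sends
that null set to a null set; so arbitrarily small `p` are values of `S` only at points of
differentiability of `G`. -/
lemma exists_small_regular_value [FiniteDimensional ℝ V] {G S : V → V} {c d : NNReal}
    (hG : LipschitzWith c G) (hS : LipschitzWith d S) {δ : ℝ} (hδ : 0 < δ) :
    ∃ p : V, ‖p‖ < δ ∧ ∀ y, S y = p → DifferentiableAt ℝ G y := by
  let _ : MeasurableSpace V := borel V
  have : BorelSpace V := ⟨rfl⟩
  set μ : MeasureTheory.Measure V := MeasureTheory.Measure.hausdorffMeasure (Module.finrank ℝ V)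
  have hN : μ {y | ¬ DifferentiableAt ℝ G y} = 0 :=
    MeasureTheory.ae_iff.1 (hG.ae_differentiableAt (μ := μ))
  have hSN : μ (S '' {y | ¬ DifferentiableAt ℝ G y}) = 0 := by
    have := hS.hausdorffMeasure_image_le (d := Module.finrank ℝ V) (by positivity)
      {y | ¬ DifferentiableAt ℝ G y}
    change μ _ ≤ _ * μ _ at this
    rw [hN, mul_zero] at this
    exact le_antisymm this bot_le
  have hb : μ (Metric.ball 0 δ) ≠ 0 := (Metric.measure_ball_pos μ 0 hδ).ne'
  have : ¬ Metric.ball 0 δ ⊆ S '' {y | ¬ DifferentiableAt ℝ G y} := fun h =>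
    hb (MeasureTheory.measure_mono_null h hSN)
  obtain ⟨p, hp, hpS⟩ := Set.not_subset.1 this
  refine ⟨p, by simpa using hp, fun y hy => ?_⟩
  by_contra h
  exact hpS ⟨y, h, hy⟩

lemma eq_zero_of_inner_le_sq {a : V} {C : ℝ} (h : ∀ d, ⟪a, d⟫ ≤ C * ‖d‖ ^ 2) : a = 0 := by
  have h1 := h ((1 / (2 * (|C| + 1))) • a)
  have hC : 0 < 2 * (|C| + 1) := by positivity
  set t := 1 / (2 * (|C| + 1))
  have ht : 0 < t := by positivity
  have htC : t * |C| ≤ 1 / 2 := by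
    simp only [t]; rw [div_mul_eq_mul_div, div_le_div_iff₀ hC (by norm_num)]; linarith
  rw [inner_smul_right, real_inner_self_eq_norm_sq, norm_smul, Real.norm_of_nonneg ht.le] at h1
  have h2 : C ≤ |C| := le_abs_self C
  have h3 : t * ‖a‖ ^ 2 ≤ t * ‖a‖ ^ 2 * (1 / 2) := by
    calc t * ‖a‖ ^ 2 ≤ C * (t * ‖a‖) ^ 2 := h1
      _ ≤ |C| * (t * ‖a‖) ^ 2 := by gcongr
      _ = t * ‖a‖ ^ 2 * (t * |C|) := by ring
      _ ≤ _ := by gcongr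
  have h4 : t * ‖a‖ ^ 2 ≤ 0 := by linarith
  have h5 : ‖a‖ ^ 2 ≤ 0 := by
    by_contra h6
    push Not at h6
    nlinarith [mul_pos ht h6]
  have : ‖a‖ = 0 := by nlinarith [sq_nonneg ‖a‖]
  exact norm_eq_zero.1 this

/-- A function homogeneous of degree two with `f z ≤ o(‖z‖²)` at the origin is nonpositive. -/
lemma nonpos_of_local {f : V → ℝ} (hf : ∀ (t : ℝ) z, f (t • z) = t ^ 2 * f z)
    (h : ∀ ε > (0 : ℝ), ∃ δ > (0 : ℝ), ∀ z, ‖z‖ < δ → f z ≤ ε * ‖z‖ ^ 2) (z : V) : f z ≤ 0 := by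
  refine le_of_forall_pos_le_add fun ε hε => ?_
  obtain ⟨δ, hδ, H⟩ := h (ε / (‖z‖ ^ 2 + 1)) (by positivity)
  set t := δ / (2 * (‖z‖ + 1))
  have ht : 0 < t := by positivity
  have h1 := H (t • z) (by
    rw [norm_smul, Real.norm_of_nonneg ht.le]
    simp only [t]
    rw [div_mul_eq_mul_div, div_lt_iff₀ (by positivity)]
    nlinarith [norm_nonneg z])
  rw [hf, norm_smul, Real.norm_of_nonneg ht.le] at h1
  have h2 : t ^ 2 * f z ≤ t ^ 2 * (ε / (‖z‖ ^ 2 + 1) * ‖z‖ ^ 2) := by linarith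
  have h3 := le_of_mul_le_mul_left h2 (by positivity)
  have h4 : ε / (‖z‖ ^ 2 + 1) * ‖z‖ ^ 2 ≤ ε := by
    rw [div_mul_eq_mul_div, div_le_iff₀ (by positivity)]; nlinarith
  linarith

/-! ### Sup-convolution -/

/-- Completing the square for the kernel of an inf-convolution (parameter `m`) of a
sup-convolution (parameter `l`): the composite kernel is that of a sup-convolution with
parameter `r`, where `1/r = 1/l - 1/m`. -/
lemma square_identity {l m r : ℝ} (hlm : l < m) (hr : r * (m - l) = l * m) (x y z : V) :
    -(l / 2) * ‖z - x‖ ^ 2 + m / 2 * ‖x - y‖ ^ 2 =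
      (m - l) / 2 * ‖x - y + (l / (m - l)) • (z - y)‖ ^ 2 - r / 2 * ‖z - y‖ ^ 2 := by
  have hr' : r = l * m / (m - l) := by rw [← hr]; field_simp [sub_ne_zero.2 hlm.ne']
  have e : z - x = (z - y) - (x - y) := by abel
  rw [e]
  generalize z - y = a
  generalize x - y = b
  rw [norm_sub_sq_real, norm_add_sq_real, inner_smul_right, norm_smul, mul_pow,
    Real.norm_eq_abs, sq_abs, real_inner_comm a b, hr']
  have := sub_ne_zero.2 hlm.ne'
  field_simp
  ring

/-- The sup-convolution `w x = max_{z ∈ K} (v z - (l/2)‖z - x‖²)`, given by the two properties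
that determine it; the later lemmas use `w` only through them. -/
lemma exists_supconv {K : Set V} (hK : IsCompact K) (hne : K.Nonempty) {v : V → ℝ}
    (hv : ContinuousOn v K) (l : ℝ) : ∃ w : V → ℝ,
      (∀ z ∈ K, ∀ x, v z - l / 2 * ‖z - x‖ ^ 2 ≤ w x) ∧
      ∀ x, ∃ z ∈ K, w x = v z - l / 2 * ‖z - x‖ ^ 2 := by
  have h : ∀ x, ∃ z ∈ K, ∀ z' ∈ K, v z' - l / 2 * ‖z' - x‖ ^ 2 ≤ v z - l / 2 * ‖z - x‖ ^ 2 := by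
    intro x
    have hc : ContinuousOn (fun z => v z - l / 2 * ‖z - x‖ ^ 2) K :=
      hv.sub (by fun_prop)
    obtain ⟨z, hz, hz'⟩ := hK.exists_isMaxOn hne hc
    exact ⟨z, hz, fun z' h' => hz' h'⟩
  choose zf hz hmax using h
  exact ⟨fun x => v (zf x) - l / 2 * ‖zf x - x‖ ^ 2, fun z hzK x => hmax x z hzK,
    fun x => ⟨zf x, hz x, rfl⟩⟩

lemma segment_identity (a b y : V) (t : ℝ) :
    ‖a + t • (b - a) - y‖ ^ 2 =
      (1 - t) * ‖a - y‖ ^ 2 + t * ‖b - y‖ ^ 2 - t * (1 - t) * ‖b - a‖ ^ 2 := by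
  have e1 : a + t • (b - a) - y = (a - y) + t • (b - a) := by abel
  have e2 : b - y = (a - y) + (b - a) := by abel
  rw [e1, e2, norm_add_sq_real, norm_add_sq_real, inner_smul_right, norm_smul, mul_pow,
    Real.norm_eq_abs, sq_abs]
  ring

/-- The sup-convolution is semiconvex: `w + (l/2)‖·‖²` is convex, as a maximum of affine
functions. -/
lemma supconv_semiconvex {K : Set V} {v w : V → ℝ} {l : ℝ}
    (h1 : ∀ z ∈ K, ∀ x, v z - l / 2 * ‖z - x‖ ^ 2 ≤ w x)
    (h2 : ∀ x, ∃ z ∈ K, w x = v z - l / 2 * ‖z - x‖ ^ 2) (a b : V) {t : ℝ} (ht : 0 ≤ t)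
    (ht' : t ≤ 1) :
    w (a + t • (b - a)) ≤ (1 - t) * w a + t * w b + l / 2 * (t * (1 - t)) * ‖b - a‖ ^ 2 := by
  obtain ⟨z, hz, e⟩ := h2 (a + t • (b - a))
  rw [e, norm_sub_rev, segment_identity, norm_sub_rev a z, norm_sub_rev b z]
  nlinarith [mul_le_mul_of_nonneg_left (h1 z hz a) (sub_nonneg.2 ht'),
    mul_le_mul_of_nonneg_left (h1 z hz b) ht]

lemma supconv_continuous [FiniteDimensional ℝ V] {K : Set V} {v w : V → ℝ} {l : ℝ}
    (h1 : ∀ z ∈ K, ∀ x, v z - l / 2 * ‖z - x‖ ^ 2 ≤ w x)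
    (h2 : ∀ x, ∃ z ∈ K, w x = v z - l / 2 * ‖z - x‖ ^ 2) : Continuous w := by
  have hc : ConvexOn ℝ Set.univ (fun x => w x + l / 2 * ‖x‖ ^ 2) := by
    refine ⟨convex_univ, fun a _ b _ s t hs ht hst => ?_⟩
    obtain rfl : s = 1 - t := by linarith
    have e : (1 - t) • a + t • b = a + t • (b - a) := by module
    have h3 := supconv_semiconvex h1 h2 a b ht (by linarith)
    have h4 := segment_identity a b 0 t
    simp only [sub_zero] at h4
    simp only [smul_eq_mul]
    rw [e, h4]
    linarith
  have := continuousOn_univ.1 (hc.continuousOn isOpen_univ)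
  have h5 : Continuous (fun x => (w x + l / 2 * ‖x‖ ^ 2) - l / 2 * ‖x‖ ^ 2) :=
    this.sub (by fun_prop)
  simpa using h5

/-! ### Lasry–Lions regularisation -/

/-- The inf-convolution `E y = min_x (w x + (m/2)‖x - y‖²)` of a sup-convolution `w` with
parameter `l < m`. The first two properties determine `E`; the last two say that it is
differentiable with gradient `G` and has second derivatives between `-r` and `m`. The lower bound
rests on the strong convexity, with modulus `m - l`, of `x ↦ w x + (m/2)‖x - y‖²`. -/
lemma exists_lasryLions [FiniteDimensional ℝ V] {K : Set V} (hne : K.Nonempty) {v w : V → ℝ}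
    {l m r : ℝ} (hlm : l < m) (hr : r * (m - l) = l * m)
    (h1 : ∀ z ∈ K, ∀ x, v z - l / 2 * ‖z - x‖ ^ 2 ≤ w x)
    (h2 : ∀ x, ∃ z ∈ K, w x = v z - l / 2 * ‖z - x‖ ^ 2) :
    ∃ (E : V → ℝ) (G : V → V),
      (∀ x y, E y ≤ w x + m / 2 * ‖x - y‖ ^ 2) ∧
      (∀ y C, (∀ x, C ≤ w x + m / 2 * ‖x - y‖ ^ 2) → C ≤ E y) ∧
      (∀ y k, E (y + k) ≤ E y + ⟪G y, k⟫ + m / 2 * ‖k‖ ^ 2) ∧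
      (∀ y k, E y + ⟪G y, k⟫ - r / 2 * ‖k‖ ^ 2 ≤ E (y + k)) := by
  have hml : 0 < m - l := sub_pos.2 hlm
  obtain ⟨z₀, hz₀⟩ := hne
  have hcont := supconv_continuous h1 h2
  have hex : ∀ y, ∃ x, ∀ x', w x + m / 2 * ‖x - y‖ ^ 2 ≤ w x' + m / 2 * ‖x' - y‖ ^ 2 := by
    intro y
    have hc : Continuous fun x => w x + m / 2 * ‖x - y‖ ^ 2 := by fun_prop
    refine hc.exists_forall_le ?_
    have hlow : ∀ x, (v z₀ - r / 2 * ‖z₀ - y‖ ^ 2) +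
        (m - l) / 2 * ‖x - y + (l / (m - l)) • (z₀ - y)‖ ^ 2 ≤ w x + m / 2 * ‖x - y‖ ^ 2 := by
      intro x
      have := square_identity hlm hr x y z₀
      linarith [h1 z₀ hz₀ x]
    refine tendsto_atTop_mono hlow ?_
    refine tendsto_atTop_add_const_left _ _ ?_
    refine Tendsto.const_mul_atTop (by positivity) ?_
    refine (tendsto_pow_atTop two_ne_zero).comp ?_
    refine (tendsto_norm_cocompact_atTop (E := V)).comp ?_
    have e : (fun x : V => x - y + (l / (m - l)) • (z₀ - y)) =
        Homeomorph.addRight (-y + (l / (m - l)) • (z₀ - y)) := by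
      ext x; simp [sub_eq_add_neg, add_assoc]
    rw [e]
    exact (Homeomorph.isClosedEmbedding _).tendsto_cocompact
  choose P hP using hex
  -- strong convexity of the objective at its minimiser
  have hstrong : ∀ y x', w (P y) + m / 2 * ‖P y - y‖ ^ 2 + (m - l) / 2 * ‖x' - P y‖ ^ 2 ≤
      w x' + m / 2 * ‖x' - y‖ ^ 2 := by
    intro y x'
    refine le_of_forall_pos_le_add fun ε hε => ?_
    have key : ∀ t : ℝ, 0 < t → t ≤ 1 →
        w (P y) + m / 2 * ‖P y - y‖ ^ 2 + (m - l) / 2 * ((1 - t) * ‖x' - P y‖ ^ 2) ≤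
          w x' + m / 2 * ‖x' - y‖ ^ 2 := by
      intro t ht ht'
      have a1 := hP y (P y + t • (x' - P y))
      have a2 := supconv_semiconvex h1 h2 (P y) x' ht.le ht'
      rw [segment_identity] at a1
      refine le_of_mul_le_mul_left ?_ ht
      nlinarith
    set c := (m - l) / 2 * ‖x' - P y‖ ^ 2
    have hc : 0 ≤ c := by positivity
    have ht : 0 < min 1 (ε / (c + 1)) := by positivity
    have b := key _ ht (min_le_left _ _)
    have b2 : min 1 (ε / (c + 1)) * c ≤ ε := by
      calc min 1 (ε / (c + 1)) * c ≤ ε / (c + 1) * c := by gcongr; exact min_le_right _ _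
        _ ≤ ε := by rw [div_mul_eq_mul_div, div_le_iff₀ (by positivity)]; nlinarith
    have b3 : (m - l) / 2 * ((1 - min 1 (ε / (c + 1))) * ‖x' - P y‖ ^ 2) =
      c - min 1 (ε / (c + 1)) * c := by simp only [c]; ring
    linarith
  have hshift : ∀ x y k : V, ‖x - (y + k)‖ ^ 2 = ‖x - y‖ ^ 2 - 2 * ⟪x - y, k⟫ + ‖k‖ ^ 2 := by
    intro x y k
    rw [← sub_sub, norm_sub_sq_real]
  refine ⟨fun y => w (P y) + m / 2 * ‖P y - y‖ ^ 2, fun y => m • (y - P y),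
    fun x y => hP y x, fun y C h => h (P y), fun y k => ?_, fun y k => ?_⟩
  · have a1 := hP (y + k) (P y)
    rw [hshift (P y) y k] at a1
    rw [inner_smul_left, ← neg_sub (P y) y, inner_neg_left]
    simp only [conj_trivial]
    linarith
  · set x' := P (y + k)
    have a1 := hstrong y x'
    have e : x' - y = (x' - P y) + (P y - y) := by abel
    have a2 : ⟪x' - y, k⟫ = ⟪x' - P y, k⟫ + ⟪P y - y, k⟫ := by rw [e, inner_add_left]
    beta_reduce
    change _ ≤ w x' + m / 2 * ‖x' - (y + k)‖ ^ 2
    rw [hshift x' y k, a2, inner_smul_left, ← neg_sub (P y) y, inner_neg_left]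
    simp only [conj_trivial]
    have a3 : 0 ≤ (m - l) / 2 * ‖(x' - P y) - (m / (m - l)) • k‖ ^ 2 := by positivity
    rw [norm_sub_sq_real, inner_smul_right, norm_smul, mul_pow, Real.norm_eq_abs, sq_abs] at a3
    have a4 : (m - l) / 2 * (‖x' - P y‖ ^ 2 - 2 * (m / (m - l) * ⟪x' - P y, k⟫) +
        (m / (m - l)) ^ 2 * ‖k‖ ^ 2) =
      (m - l) / 2 * ‖x' - P y‖ ^ 2 - m * ⟪x' - P y, k⟫ + (m + r) / 2 * ‖k‖ ^ 2 := by
      have hr' : r = l * m / (m - l) := by rw [← hr]; field_simp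
      rw [hr']
      field_simp
      ring
    rw [a4] at a3
    linarith

lemma hasFDerivAt_of_sq_bounds {E : V → ℝ} {G : V → V} {m r : ℝ}
    (hu : ∀ y k, E (y + k) ≤ E y + ⟪G y, k⟫ + m / 2 * ‖k‖ ^ 2)
    (hl : ∀ y k, E y + ⟪G y, k⟫ - r / 2 * ‖k‖ ^ 2 ≤ E (y + k)) (y : V) :
    HasFDerivAt E (innerSL ℝ (G y)) y := by
  rw [hasFDerivAt_iff_isLittleO_nhds_zero]
  have hO : (fun k => E (y + k) - E y - innerSL ℝ (G y) k) =O[nhds 0]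
      fun k : V => ‖k‖ ^ 2 := by
    refine Asymptotics.IsBigO.of_bound (|m| / 2 + |r| / 2) (Eventually.of_forall fun k => ?_)
    simp only [innerSL_apply_apply, norm_pow, Real.norm_eq_abs, abs_norm]
    have h0 : 0 ≤ ‖k‖ ^ 2 := by positivity
    rw [abs_le]
    constructor <;> nlinarith [hu y k, hl y k, le_abs_self m, le_abs_self r, neg_abs_le m,
      neg_abs_le r, abs_nonneg m, abs_nonneg r]
  exact hO.trans_isLittleO (by simpa using Asymptotics.isLittleO_norm_pow_id one_lt_two)

/-- Two-sided quadratic bounds make the gradient Lipschitz; the constant is not sharp. -/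
lemma lipschitz_of_sq_bounds {E : V → ℝ} {G : V → V} {m r : ℝ} (hm : 0 ≤ m) (hr : 0 ≤ r)
    (hu : ∀ y k, E (y + k) ≤ E y + ⟪G y, k⟫ + m / 2 * ‖k‖ ^ 2)
    (hl : ∀ y k, E y + ⟪G y, k⟫ - r / 2 * ‖k‖ ^ 2 ≤ E (y + k)) :
    LipschitzWith ⟨3 * (m + r), by positivity⟩ G := by
  refine LipschitzWith.of_dist_le_mul fun x y => ?_
  rw [dist_eq_norm, dist_eq_norm]
  change ‖G x - G y‖ ≤ 3 * (m + r) * ‖x - y‖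
  obtain ⟨k, rfl⟩ : ∃ k, x = y + k := ⟨x - y, by abel⟩
  rw [add_sub_cancel_left]
  by_cases hg : G (y + k) - G y = 0
  · rw [hg, norm_zero]; positivity
  by_cases hk : k = 0
  · simp [hk]
  have hk0 : 0 < ‖k‖ := norm_pos_iff.2 hk
  set a := G (y + k) - G y with ha
  have ha0 : 0 < ‖a‖ := norm_pos_iff.2 hg
  -- test displacement of length `‖k‖` against the direction of `a`
  set u := -((‖k‖ / ‖a‖) • a) with hu'
  have hun : ‖u‖ = ‖k‖ := by
    rw [hu', norm_neg, norm_smul, Real.norm_of_nonneg (by positivity)]; field_simp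
  have c1 := hu (y + k) u
  have c2 := hl y (k + u)
  have c3 := hu y k
  rw [← add_assoc] at c2
  have c4 : ⟪a, u⟫ = -(‖k‖ * ‖a‖) := by
    rw [hu', inner_neg_right, inner_smul_right, real_inner_self_eq_norm_sq]; field_simp
  have c5 : ⟪G (y + k), u⟫ = ⟪a, u⟫ + ⟪G y, u⟫ := by rw [ha, inner_sub_left]; ring
  have c6 : ‖k + u‖ ^ 2 ≤ (2 * ‖k‖) ^ 2 := by
    have := norm_add_le k u
    rw [hun] at this
    gcongr; linarith
  rw [inner_add_right] at c2
  rw [hun] at c1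
  have c7 : r / 2 * ‖k + u‖ ^ 2 ≤ r / 2 * (2 * ‖k‖) ^ 2 := by gcongr
  have c8 : ‖k‖ * ‖a‖ ≤ ‖k‖ * (3 * (m + r) * ‖k‖) := by
    have : 0 ≤ m * ‖k‖ ^ 2 := by positivity
    have : 0 ≤ r * ‖k‖ ^ 2 := by positivity
    nlinarith
  exact le_of_mul_le_mul_left c8 hk0

/-- Differentiability of the gradient at the single point `y` gives a second-order Taylor
expansion there, with a symmetric Hessian. -/
lemma taylor_two {E : V → ℝ} {G : V → V} {Z : V →L[ℝ] V} {y : V}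
    (hE : ∀ y, HasFDerivAt E (innerSL ℝ (G y)) y) (hG : HasFDerivAt G Z y) :
    (∀ a b, ⟪Z a, b⟫ = ⟪a, Z b⟫) ∧
    ∀ ε > (0 : ℝ), ∃ δ > (0 : ℝ), ∀ k, ‖k‖ < δ →
      |E (y + k) - E y - ⟪G y, k⟫ - 1 / 2 * ⟪Z k, k⟫| ≤ ε * ‖k‖ ^ 2 := by
  have hsym : ∀ a b, ⟪Z a, b⟫ = ⟪a, Z b⟫ := by
    intro a b
    have h := second_derivative_symmetric hE
      ((innerSL ℝ (E := V)).hasFDerivAt.comp y hG) a b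
    have h' : ⟪Z a, b⟫ = ⟪Z b, a⟫ := h
    rw [h', real_inner_comm]
  refine ⟨hsym, fun ε hε => ?_⟩
  have h1 := (hasFDerivAt_iff_isLittleO_nhds_zero.1 hG).def hε
  obtain ⟨δ, hδ, H⟩ := Metric.eventually_nhds_iff_ball.1 h1
  refine ⟨δ, hδ, fun k hk => ?_⟩
  have hd : ∀ t ∈ Metric.closedBall (0 : V) ‖k‖,
      HasFDerivWithinAt (fun k => E (y + k) - E y - ⟪G y, k⟫ - 1 / 2 * ⟪Z k, k⟫)
        (innerSL ℝ (G (y + t) - G y - Z t)) (Metric.closedBall (0 : V) ‖k‖) t := by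
    intro t _
    have d1 : HasFDerivAt (fun k => E (y + k)) (innerSL ℝ (G (y + t))) t :=
      (hasFDerivAt_comp_add_left y).2 (hE (y + t))
    have d2 : HasFDerivAt (fun k => ⟪G y, k⟫) (innerSL ℝ (G y)) t :=
      (innerSL ℝ (G y)).hasFDerivAt
    have d3 := (Z.hasFDerivAt (x := t)).inner ℝ (hasFDerivAt_id t)
    have d4 := ((d1.sub_const (E y)).sub d2).sub (d3.const_mul (1 / 2))
    refine (d4.congr_fderiv ?_).hasFDerivWithinAt
    ext b
    simp [fderivInnerCLM_apply]
    rw [hsym b t, real_inner_comm b (Z t)]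
    ring
  have hb : ∀ t ∈ Metric.closedBall (0 : V) ‖k‖, ‖innerSL ℝ (G (y + t) - G y - Z t)‖ ≤ ε * ‖k‖ := by
    intro t ht
    rw [innerSL_apply_norm]
    have ht' : ‖t‖ ≤ ‖k‖ := by simpa using ht
    refine (H t (by simpa using ht'.trans_lt hk)).trans ?_
    gcongr
  have := (convex_closedBall (0 : V) ‖k‖).norm_image_sub_le_of_norm_hasFDerivWithin_le hd hb
    (x := 0) (y := k) (by simp) (by simp)
  simp only [add_zero, inner_zero_right, map_zero, sub_self, mul_zero, sub_zero,
    Real.norm_eq_abs] at this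
  rw [pow_two, ← mul_assoc]
  exact this

/-! ### Contact points -/

/-- Suppose the sup-convolution `w` is attained at `x` by `z`, with slope `q = l(z - x)`. At
`y = x + q/m` the inf-convolution is attained by `x`, its gradient is `q`, and `v` is touched from
above at `z` by a translate of `E` about `y`. Second-order information on `E` at `y` therefore
becomes information on the jets of `v` at `z`. -/
lemma contact_facts {K : Set V} {v w E : V → ℝ} {G : V → V} {l m r : ℝ} (hl0 : 0 < l) (hlm : l < m)
    (hr : r * (m - l) = l * m)
    (h1 : ∀ z ∈ K, ∀ x, v z - l / 2 * ‖z - x‖ ^ 2 ≤ w x)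
    (hE1 : ∀ x y, E y ≤ w x + m / 2 * ‖x - y‖ ^ 2)
    (hE2 : ∀ y C, (∀ x, C ≤ w x + m / 2 * ‖x - y‖ ^ 2) → C ≤ E y)
    (hEl : ∀ y k, E y + ⟪G y, k⟫ - r / 2 * ‖k‖ ^ 2 ≤ E (y + k))
    {x z q y : V} (hz : z ∈ K) (hx : w x = v z - l / 2 * ‖z - x‖ ^ 2)
    (hq : l • (z - x) = q) (hy : m • (y - x) = q) :
    E y = w x + m / 2 * ‖x - y‖ ^ 2 ∧ G y = q ∧
      ∀ ζ, z + ζ ∈ K → v (z + ζ) - v z ≤ E (y + ζ) - E y := by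
  have hml : 0 < m - l := sub_pos.2 hlm
  have hm : 0 < m := hl0.trans hlm
  have hzero : x - y + (l / (m - l)) • (z - y) = 0 := by
    have e1 : z - x = l⁻¹ • q := by rw [← hq, smul_smul, inv_mul_cancel₀ hl0.ne', one_smul]
    have e2 : y - x = m⁻¹ • q := by rw [← hy, smul_smul, inv_mul_cancel₀ hm.ne', one_smul]
    have e3 : z - y = l⁻¹ • q - m⁻¹ • q := by rw [← e1, ← e2]; abel
    have e4 : x - y = -(m⁻¹ • q) := by rw [← e2]; abel
    rw [e3, e4, ← sub_smul, smul_smul, ← neg_smul, ← add_smul]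
    have : -m⁻¹ + l / (m - l) * (l⁻¹ - m⁻¹) = 0 := by field_simp; ring
    rw [this, zero_smul]
  have hsq := square_identity hlm hr x y z
  rw [hzero, norm_zero] at hsq
  have hval : w x + m / 2 * ‖x - y‖ ^ 2 = v z - r / 2 * ‖z - y‖ ^ 2 := by rw [hx]; linarith
  have hlow : ∀ z' ∈ K, ∀ y', v z' - r / 2 * ‖z' - y'‖ ^ 2 ≤ E y' := by
    intro z' hz' y'
    refine hE2 _ _ fun x' => ?_
    have := square_identity hlm hr x' y' z'
    have h0 : 0 ≤ (m - l) / 2 * ‖x' - y' + (l / (m - l)) • (z' - y')‖ ^ 2 := by positivity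
    linarith [h1 z' hz' x']
  have hEy : E y = w x + m / 2 * ‖x - y‖ ^ 2 :=
    le_antisymm (hE1 x y) (by rw [hval]; exact hlow z hz y)
  refine ⟨hEy, ?_, fun ζ hζ => ?_⟩
  · rw [← hy, ← sub_eq_zero]
    refine eq_zero_of_inner_le_sq (C := (m + r) / 2) fun d => ?_
    have a1 := hEl y d
    have a2 := hE1 x (y + d)
    rw [← sub_sub, norm_sub_sq_real] at a2
    rw [inner_sub_left, inner_smul_left, ← neg_sub x y, inner_neg_left]
    simp only [conj_trivial]
    linarith
  · have := hlow _ hζ (y + ζ)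
    rw [add_sub_add_right_eq_sub] at this
    linarith

/-- For `W ≤ ½⟪Bx, x⟫ - (η/2)‖x‖²` with `W 0 ≥ 0`, every slope `p` has a point `x`, within
`2‖p‖/η` of the origin, at which `W` is touched from above by a quadratic with Hessian `B` and
gradient `Bx + p`: the maximum point of `W - ½⟪Bx, x⟫ - ⟪p, x⟫`. -/
lemma exists_contact_point [FiniteDimensional ℝ V] {B : V →L[ℝ] V}
    (hBs : ∀ a b, ⟪B a, b⟫ = ⟪a, B b⟫) {W : V → ℝ} {η : ℝ} (hη : 0 < η) (hWc : Continuous W)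
    (hW : ∀ x, W x ≤ 1 / 2 * ⟪B x, x⟫ - η / 2 * ‖x‖ ^ 2) (hW0 : 0 ≤ W 0) (p : V) :
    ∃ x : V, ‖x‖ ≤ 2 * ‖p‖ / η ∧ ∀ d,
      W (x + d) ≤ W x + ⟪B x + p, d⟫ + 1 / 2 * ⟪B d, d⟫ := by
  have hFc : Continuous fun x : V => W x - 1 / 2 * ⟪B x, x⟫ - ⟪p, x⟫ := by fun_prop
  obtain ⟨x, hx, hmax⟩ := (isCompact_closedBall (0 : V) (2 * ‖p‖ / η)).exists_isMaxOn
    ⟨0, by simp; positivity⟩ hFc.continuousOn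
  have hx' : ‖x‖ ≤ 2 * ‖p‖ / η := by simpa using hx
  -- outside the ball the objective is negative, so the maximum over the ball is global
  have hmax' : ∀ x', W x' - 1 / 2 * ⟪B x', x'⟫ - ⟪p, x'⟫ ≤
      W x - 1 / 2 * ⟪B x, x⟫ - ⟪p, x⟫ := by
    intro x'
    by_cases hx'b : x' ∈ Metric.closedBall (0 : V) (2 * ‖p‖ / η)
    · exact hmax hx'b
    · have a0 : W 0 - 1 / 2 * ⟪B 0, (0 : V)⟫ - ⟪p, (0 : V)⟫ ≤
        W x - 1 / 2 * ⟪B x, x⟫ - ⟪p, x⟫ := hmax (by simp; positivity)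
      rw [inner_zero_right, inner_zero_right] at a0
      have a1 : 2 * ‖p‖ / η < ‖x'‖ := by simpa using hx'b
      rw [div_lt_iff₀ hη] at a1
      have a2 : -⟪p, x'⟫ ≤ ‖p‖ * ‖x'‖ := (neg_le_abs _).trans (abs_real_inner_le_norm _ _)
      nlinarith [hW x', norm_nonneg x', norm_nonneg p]
  refine ⟨x, hx', fun d => ?_⟩
  have a1 := hmax' (x + d)
  have a2 : ⟪B (x + d), x + d⟫ = ⟪B x, x⟫ + 2 * ⟪B x, d⟫ + ⟪B d, d⟫ := by
    rw [map_add, inner_add_left, inner_add_right, inner_add_right, hBs d x,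
      real_inner_comm (B x) d]; ring
  rw [a2, inner_add_right] at a1
  rw [inner_add_left]
  linarith

end Generic

/-! ### Sums over a product space -/

section Product
variable {ι : Type*} [Fintype ι] {V : ι → Type*} [∀ i, NormedAddCommGroup (V i)]
  [∀ i, InnerProductSpace ℝ (V i)]

lemma lipschitz_piLp {c : NNReal} {G : ∀ i, V i → V i} (hG : ∀ i, LipschitzWith c (G i)) :
    LipschitzWith c (fun y : PiLp 2 V => (WithLp.toLp 2 fun i => G i (y i) : PiLp 2 V)) := by
  refine LipschitzWith.of_dist_le_mul fun x y => ?_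
  rw [dist_eq_norm, dist_eq_norm]
  refine le_of_sq_le_sq ?_ (by positivity)
  rw [mul_pow, PiLp.norm_sq_eq_of_L2, PiLp.norm_sq_eq_of_L2, Finset.mul_sum]
  refine Finset.sum_le_sum fun i _ => ?_
  have := (hG i).dist_le_mul (x i) (y i)
  rw [dist_eq_norm, dist_eq_norm] at this
  rw [← mul_pow]
  exact pow_le_pow_left₀ (norm_nonneg _) this 2

lemma differentiableAt_component [DecidableEq ι] {G : ∀ i, V i → V i} {y : PiLp 2 V}
    (h : DifferentiableAt ℝ
      (fun y : PiLp 2 V => (WithLp.toLp 2 fun i => G i (y i) : PiLp 2 V)) y) (i : ι) :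
    DifferentiableAt ℝ (G i) (y i) := by
  have h1 : DifferentiableAt ℝ (fun y : PiLp 2 V => G i (y i)) y :=
    (differentiableAt_piLp 2).1 h i
  have h2 : DifferentiableAt ℝ
      (fun t : V i => (WithLp.toLp 2 (Function.update (fun j => y j) i t) : PiLp 2 V)) (y i) :=
    ((PiLp.hasFDerivAt_toLp 2 _).comp _ (hasFDerivAt_update (𝕜 := ℝ) (fun j => y j)
      (y i))).differentiableAt
  have e : (WithLp.toLp 2 (Function.update (fun j => y j) i (y i)) : PiLp 2 V) = y := by
    ext j; simp
  have h3 := DifferentiableAt.comp (y i) (g := fun y : PiLp 2 V => G i (y i)) (by rw [e]; exact h1) h2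
  simpa [Function.comp_def] using h3

lemma exists_pos_le_all {δ : ι → ℝ} (h : ∀ i, 0 < δ i) : ∃ d > 0, ∀ i, d ≤ δ i := by
  have h1 : ∀ᶠ d in nhdsWithin (0 : ℝ) (Set.Ioi 0), ∀ i, d < δ i :=
    eventually_all.2 fun i => mem_nhdsWithin_of_mem_nhds (Iio_mem_nhds (h i))
  obtain ⟨d, hd, hd'⟩ := (h1.and self_mem_nhdsWithin).exists
  exact ⟨d, hd', fun i => (hd i).le⟩

/-- The theorem on sums up to errors `η` and `τ`, for a sum lying below a quadratic form:
the `vᵢ` have second-order expansions from above, with gradients `qᵢ` and Hessians `Zᵢ`, at points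
`zᵢ` as close to the origin as desired. -/
lemma sums_core [DecidableEq ι] [∀ i, FiniteDimensional ℝ (V i)] {v : ∀ i, V i → ℝ} {ρ : ℝ}
    (hρ : 0 < ρ) (hv : ∀ i, ContinuousOn (v i) (Metric.closedBall 0 ρ)) (hv0 : ∀ i, v i 0 = 0)
    {X : PiLp 2 V →L[ℝ] PiLp 2 V} (hX : ∀ z w, ⟪X z, w⟫ = ⟪z, X w⟫)
    {η ε : ℝ} (hη : 0 < η) (hε : 0 < ε)
    (hvX : ∀ z : PiLp 2 V, (∀ i, z i ∈ Metric.closedBall 0 ρ) →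
      ∑ i, v i (z i) ≤ 1 / 2 * ⟪X z, z⟫ + η / 2 * ‖z‖ ^ 2) {τ : ℝ} (hτ : 0 < τ) :
    ∃ (z q : PiLp 2 V) (Z : ∀ i, V i →L[ℝ] V i), ‖z‖ < τ ∧ ‖q‖ < τ ∧
      (∀ i, ∀ a b, ⟪Z i a, b⟫ = ⟪a, Z i b⟫) ∧
      (∀ i, ∀ e > (0 : ℝ), ∃ δ > (0 : ℝ), ∀ ζ, ‖ζ‖ < δ →
        v i (z i + ζ) ≤ v i (z i) + ⟪q i, ζ⟫ + 1 / 2 * ⟪Z i ζ, ζ⟫ + e * ‖ζ‖ ^ 2) ∧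
      (∀ i ξ, -(1 / ε + ‖X‖ + 2 * η) * ‖ξ‖ ^ 2 ≤ ⟪Z i ξ, ξ⟫) ∧
      (∀ ξ : PiLp 2 V, ∑ i, ⟪Z i (ξ i), ξ i⟫ ≤
        ⟪X ξ, ξ⟫ + η * ‖ξ‖ ^ 2 + ε * ‖X ξ + η • ξ‖ ^ 2 + η * ‖ξ‖ ^ 2) := by
  -- `r = 1 / ε + ‖X‖ + 2 * η` is the lower Hessian bound to be reached, and `1/m = 1/l - 1/r`
  set l : ℝ := 1 / ε + ‖X‖ + η with hl
  set m : ℝ := l * (l + η) / η with hm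
  set r : ℝ := l + η with hr
  have hl0 : 0 < l := by positivity
  have hml : m - l = l ^ 2 / η := by rw [hm]; field_simp; ring
  have hlm : l < m := by
    have : 0 < m - l := by rw [hml]; positivity
    linarith
  have hm0 : 0 < m := hl0.trans hlm
  have hr0 : 0 < r := by positivity
  have hrm : r * (m - l) = l * m := by rw [hml, hm, hr]; ring
  have hK : ∀ i, IsCompact (Metric.closedBall (0 : V i) ρ) := fun i => isCompact_closedBall _ _
  have hKn : ∀ i, (Metric.closedBall (0 : V i) ρ).Nonempty := fun i => ⟨0, by simp [hρ.le]⟩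
  choose w h1 h2 using fun i => exists_supconv (hK i) (hKn i) (hv i) l
  choose E G hE1 hE2 hEu hEl using
    fun i => exists_lasryLions (hKn i) hlm hrm (h1 i) (h2 i)
  have hwc : ∀ i, Continuous (w i) := fun i => supconv_continuous (h1 i) (h2 i)
  set Y : PiLp 2 V →L[ℝ] PiLp 2 V := X + η • ContinuousLinearMap.id ℝ _ with hY
  have hYa : ∀ ξ, Y ξ = X ξ + η • ξ := fun ξ => by simp [hY]
  have hYs : ∀ a b, ⟪Y a, b⟫ = ⟪a, Y b⟫ := fun a b => by
    rw [hYa, hYa, inner_add_left, inner_add_right, hX, inner_smul_left, inner_smul_right]; simp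
  set B : PiLp 2 V →L[ℝ] PiLp 2 V := Y + ε • (Y.comp Y) + η • ContinuousLinearMap.id ℝ _ with hB
  have hBa : ∀ ξ, B ξ = Y ξ + ε • Y (Y ξ) + η • ξ := fun ξ => by simp [hB]
  have hBs : ∀ a b, ⟪B a, b⟫ = ⟪a, B b⟫ := fun a b => by
    rw [hBa, hBa]
    simp only [inner_add_left, inner_add_right, hYs, inner_smul_left, inner_smul_right,
      conj_trivial]
  have hBq : ∀ ξ, ⟪B ξ, ξ⟫ = ⟪Y ξ, ξ⟫ + ε * ‖Y ξ‖ ^ 2 + η * ‖ξ‖ ^ 2 := fun ξ => by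
    rw [hBa, inner_add_left, inner_add_left, inner_smul_left, inner_smul_left, hYs (Y ξ),
      real_inner_self_eq_norm_sq, real_inner_self_eq_norm_sq]; simp
  have hYq : ∀ ξ, ⟪Y ξ, ξ⟫ = ⟪X ξ, ξ⟫ + η * ‖ξ‖ ^ 2 := fun ξ => by
    rw [hYa, inner_add_left, inner_smul_left, real_inner_self_eq_norm_sq]; simp
  have hBn : ∀ ξ, ⟪B ξ, ξ⟫ ≤ ‖B‖ * ‖ξ‖ ^ 2 := fun ξ => by
    calc ⟪B ξ, ξ⟫ ≤ ‖B ξ‖ * ‖ξ‖ := real_inner_le_norm _ _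
      _ ≤ ‖B‖ * ‖ξ‖ * ‖ξ‖ := by gcongr; exact B.le_opNorm ξ
      _ = _ := by ring
  -- the sup-convolution of the sum lies below the regularised quadratic form
  have hW : ∀ x : PiLp 2 V, ∑ i, w i (x i) ≤ 1 / 2 * ⟪B x, x⟫ - η / 2 * ‖x‖ ^ 2 := by
    intro x
    choose z hz hzw using fun i => h2 i (x i)
    obtain ⟨d, hd⟩ : ∃ d : PiLp 2 V, x + d = WithLp.toLp 2 z := ⟨WithLp.toLp 2 z - x, by abel⟩
    have hzd : ∀ i, z i = x i + d i := fun i => by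
      have := congrArg (fun f : PiLp 2 V => f i) hd
      simpa using this.symm
    have e1 : ∑ i, w i (x i) = ∑ i, v i (z i) - l / 2 * ‖d‖ ^ 2 := by
      rw [PiLp.norm_sq_eq_of_L2, Finset.mul_sum, ← Finset.sum_sub_distrib]
      refine Finset.sum_congr rfl fun i _ => ?_
      rw [hzw i, hzd i, add_sub_cancel_left]
    have e2 := hvX (WithLp.toLp 2 z) hz
    rw [← hd] at e2
    have e3 : ∑ i, v i ((x + d) i) = ∑ i, v i (z i) :=
      Finset.sum_congr rfl fun i _ => by rw [hzd i]; rfl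
    have e4 : 1 / 2 * ⟪X (x + d), x + d⟫ + η / 2 * ‖x + d‖ ^ 2 =
        1 / 2 * (⟪Y x, x⟫ + 2 * ⟪Y x, d⟫ + ⟪Y d, d⟫) := by
      have : ⟪Y (x + d), x + d⟫ = ⟪Y x, x⟫ + 2 * ⟪Y x, d⟫ + ⟪Y d, d⟫ := by
        rw [map_add, inner_add_left, inner_add_right, inner_add_right, hYs d x,
          real_inner_comm (Y x) d]; ring
      rw [← this, hYq]; ring
    have e5 : ⟪Y d, d⟫ ≤ (‖X‖ + η) * ‖d‖ ^ 2 := by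
      rw [hYq]
      have : ⟪X d, d⟫ ≤ ‖X‖ * ‖d‖ * ‖d‖ :=
        (real_inner_le_norm _ _).trans (by gcongr; exact X.le_opNorm d)
      nlinarith
    have e6 : 2 * ⟪Y x, d⟫ ≤ ε * ‖Y x‖ ^ 2 + 1 / ε * ‖d‖ ^ 2 := by
      have a1 : 0 ≤ ε * ‖Y x - ε⁻¹ • d‖ ^ 2 := by positivity
      rw [norm_sub_sq_real, inner_smul_right, norm_smul, mul_pow, Real.norm_eq_abs, sq_abs] at a1
      have a2 : ε * (‖Y x‖ ^ 2 - 2 * (ε⁻¹ * ⟪Y x, d⟫) + ε⁻¹ ^ 2 * ‖d‖ ^ 2) =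
        ε * ‖Y x‖ ^ 2 - 2 * ⟪Y x, d⟫ + 1 / ε * ‖d‖ ^ 2 := by field_simp
      linarith
    rw [hBq, e1, hl]
    rw [e3, e4] at e2
    linarith
  have hW0 : 0 ≤ ∑ i, w i ((0 : PiLp 2 V) i) := by
    refine Finset.sum_nonneg fun i _ => ?_
    have := h1 i 0 (by simp [hρ.le]) 0
    simpa [hv0 i] using this
  -- the full gradient of the regularisation and the map sending `y` to its contact slope
  set Gf : PiLp 2 V → PiLp 2 V := fun y => WithLp.toLp 2 fun i => G i (y i) with hGf
  have hGfl := lipschitz_piLp (fun i => lipschitz_of_sq_bounds hm0.le hr0.le (hEu i) (hEl i))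
  have hSl : ∃ c, LipschitzWith c (fun y => Gf y - B (y - m⁻¹ • Gf y)) :=
    ⟨_, hGfl.sub (B.lipschitz.comp (LipschitzWith.id.sub
      ((lipschitzWith_smul (m⁻¹ : ℝ)).comp hGfl)))⟩
  obtain ⟨c, hSl⟩ := hSl
  set b := ‖B‖
  -- `C` is chosen so that both `‖z‖` and `‖q‖` come out at most `C * ‖p‖`
  set C : ℝ := (1 + 2 * b / η) + 2 / η + (1 + 2 * b / η) / l with hC
  have hC0 : 0 < C := by positivity
  obtain ⟨p, hp, hreg⟩ := exists_small_regular_value hGfl hSl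
    (δ := min τ ρ / C) (by positivity)
  have hpC : ‖p‖ * C < min τ ρ := (lt_div_iff₀ hC0).1 hp
  have hWc : Continuous fun x : PiLp 2 V => ∑ i, w i (x i) :=
    continuous_finsetSum _ fun i _ => (hwc i).comp (PiLp.continuous_apply 2 V i)
  obtain ⟨x, hxn, hcon⟩ := exists_contact_point hBs hη hWc hW hW0 p
  set q := B x + p with hq
  choose zf hzK hzw using fun i => h2 i (x i)
  set z : PiLp 2 V := WithLp.toLp 2 zf with hz
  have hzi : ∀ i, z i = zf i := fun i => rfl
  -- at the contact point the sum is touched from below, through the maximiser `z`, with gradient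
  -- `l • (z - x)`, and from above with gradient `q`
  have hlz : l • (z - x) = q := by
    rw [← sub_eq_zero]
    refine eq_zero_of_inner_le_sq (C := l / 2 + b / 2) fun d => ?_
    have a1 : ∑ i, w i (x i) + l * ⟪z - x, d⟫ - l / 2 * ‖d‖ ^ 2 ≤ ∑ i, w i ((x + d) i) := by
      rw [PiLp.inner_apply, PiLp.norm_sq_eq_of_L2, Finset.mul_sum, Finset.mul_sum,
        ← Finset.sum_add_distrib, ← Finset.sum_sub_distrib]
      refine Finset.sum_le_sum fun i _ => ?_
      have := h1 i (zf i) (hzK i) (x i + d i)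
      rw [← sub_sub, norm_sub_sq_real] at this
      rw [hzw i]
      change _ + l * ⟪zf i - x i, d i⟫ - _ ≤ w i (x i + d i)
      linarith
    have a2 := hcon d
    have a3 := hBn d
    rw [inner_sub_left, inner_smul_left]
    simp only [conj_trivial]
    linarith
  set y : PiLp 2 V := x + m⁻¹ • q with hy
  have hmy : m • (y - x) = q := by
    rw [hy, add_sub_cancel_left, smul_smul, mul_inv_cancel₀ hm0.ne', one_smul]
  have hfacts := fun i => contact_facts hl0 hlm hrm (h1 i) (hE1 i) (hE2 i) (hEl i) (hzK i)
    (hzw i) (q := q i) (y := y i) (by rw [← hlz]; rfl) (by rw [← hmy]; rfl)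
  have hGy : Gf y = q := by
    ext1 i; exact (hfacts i).2.1
  -- the contact slope at `y` is exactly `p`, whence the choice of `p` applies
  have hdiff := hreg y (by
    rw [hGy]
    have : y - m⁻¹ • q = x := by rw [hy]; abel
    rw [this, hq]; abel)
  have hZ := fun i => (differentiableAt_component hdiff i).hasFDerivAt
  set Z := fun i => fderiv ℝ (G i) (y i)
  have hT := fun i => taylor_two (hasFDerivAt_of_sq_bounds (hEu i) (hEl i)) (hZ i)
  have hqn : ‖q‖ ≤ (1 + 2 * b / η) * ‖p‖ := by
    calc ‖q‖ ≤ ‖B x‖ + ‖p‖ := norm_add_le _ _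
      _ ≤ b * ‖x‖ + ‖p‖ := by gcongr; exact B.le_opNorm x
      _ ≤ b * (2 * ‖p‖ / η) + ‖p‖ := by gcongr
      _ = _ := by ring
  have hzn : ‖z‖ ≤ (2 / η + (1 + 2 * b / η) / l) * ‖p‖ := by
    have e : z = x + l⁻¹ • q := by
      rw [← hlz, smul_smul, inv_mul_cancel₀ hl0.ne', one_smul]; abel
    calc ‖z‖ ≤ ‖x‖ + ‖l⁻¹ • q‖ := by rw [e]; exact norm_add_le _ _
      _ = ‖x‖ + l⁻¹ * ‖q‖ := by rw [norm_smul, Real.norm_of_nonneg (by positivity)]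
      _ ≤ 2 * ‖p‖ / η + l⁻¹ * ((1 + 2 * b / η) * ‖p‖) := by gcongr
      _ = _ := by ring
  have hp0 := norm_nonneg p
  have hb0 : 0 ≤ b := norm_nonneg B
  have hz1 : ‖z‖ < min τ ρ := by
    have : 0 ≤ (1 + 2 * b / η) * ‖p‖ := by positivity
    refine lt_of_le_of_lt ?_ hpC
    rw [hC]; linarith
  have hq1 : ‖q‖ < min τ ρ := by
    have : 0 ≤ (2 / η + (1 + 2 * b / η) / l) * ‖p‖ := by positivity
    refine lt_of_le_of_lt ?_ hpC
    rw [hC]; linarith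
  refine ⟨z, q, Z, hz1.trans_le (min_le_left _ _), hq1.trans_le (min_le_left _ _),
    fun i => (hT i).1, fun i e he => ?_, fun i ξ => ?_, fun ξ => ?_⟩
  · obtain ⟨δ, hδ, H⟩ := (hT i).2 e he
    have hzρ : ‖z i‖ < ρ :=
      (PiLp.norm_apply_le z i).trans_lt (hz1.trans_le (min_le_right _ _))
    refine ⟨min δ (ρ - ‖z i‖), lt_min hδ (by linarith), fun ζ hζ => ?_⟩
    have a1 := (hfacts i).2.2 ζ (by
      have := norm_add_le (zf i) ζ
      have h3 := hζ.trans_le (min_le_right _ _)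
      rw [hzi] at h3
      simp only [mem_closedBall_zero_iff]; linarith)
    have a2 := (abs_le.1 (H ζ (hζ.trans_le (min_le_left _ _)))).2
    rw [(hfacts i).2.1] at a2
    rw [hzi]
    linarith
  -- the lower bound for `Z i` is inherited from that for the second derivatives of `E i`
  · have key := nonpos_of_local (f := fun ξ : V i => -r * ‖ξ‖ ^ 2 - ⟪Z i ξ, ξ⟫)
      (fun t a => by
        simp only [norm_smul, mul_pow, Real.norm_eq_abs, sq_abs, map_smul, inner_smul_left,
          inner_smul_right, conj_trivial]; ring)
      (fun e he => by
        obtain ⟨δ, hδ, H⟩ := (hT i).2 (e / 2) (by positivity)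
        refine ⟨δ, hδ, fun a ha => ?_⟩
        have a1 := (abs_le.1 (H a ha)).2
        have a2 := hEl i (y i) a
        linarith) ξ
    have : r = 1 / ε + ‖X‖ + 2 * η := by rw [hr, hl]; ring
    rw [← this]
    linarith
  -- the upper bound: near `y` the sum of the `E i` lies, up to a constant, below the translated sum
  -- of the `w i`, which is touched from above by a quadratic with Hessian `B`
  · have key := nonpos_of_local
      (f := fun ξ : PiLp 2 V => ∑ i, ⟪Z i (ξ i), ξ i⟫ - ⟪B ξ, ξ⟫)
      (fun t a => by
        have : ∀ i, ⟪Z i ((t • a) i), (t • a) i⟫ = t ^ 2 * ⟪Z i (a i), a i⟫ := fun i => by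
          simp only [PiLp.smul_apply, map_smul, inner_smul_left, inner_smul_right, conj_trivial]
          ring
        simp only [this, map_smul, inner_smul_left, inner_smul_right, conj_trivial,
          ← Finset.mul_sum]
        ring)
      (fun e he => by
        choose δ hδ H using fun i => (hT i).2 (e / 2) (by positivity)
        obtain ⟨d, hd, hdi⟩ := exists_pos_le_all hδ
        refine ⟨d, hd, fun a ha => ?_⟩
        have a1 : ∑ i, (E i (y i) + ⟪q i, a i⟫ + 1 / 2 * ⟪Z i (a i), a i⟫ - e / 2 * ‖a i‖ ^ 2) ≤
            ∑ i, (w i ((x + a) i) + (E i (y i) - w i (x i))) := by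
          refine Finset.sum_le_sum fun i _ => ?_
          have b1 := (abs_le.1 (H i (a i)
            (((PiLp.norm_apply_le a i).trans_lt ha).trans_le (hdi i)))).1
          have b2 := hE1 i (x i + a i) (y i + a i)
          rw [add_sub_add_right_eq_sub] at b2
          have b3 := (hfacts i).1
          rw [(hfacts i).2.1] at b1
          change _ ≤ w i (x i + a i) + _
          linarith
        have a2 := hcon a
        rw [PiLp.inner_apply] at a2
        rw [PiLp.norm_sq_eq_of_L2]
        simp only [Finset.sum_add_distrib, Finset.sum_sub_distrib, ← Finset.mul_sum] at a1
        linarith) ξ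
    have := hBq ξ
    rw [hYq, hYa] at this
    linarith

end Product

/-! ### From jets at the origin to jets at `x` -/

lemma opNorm_le_of_quadratic {V : Type*} [NormedAddCommGroup V] [InnerProductSpace ℝ V]
    {Z : V →L[ℝ] V} (hs : ∀ a b, ⟪Z a, b⟫ = ⟪a, Z b⟫) {C : ℝ} (hC : 0 ≤ C)
    (hl : ∀ a, -C * ‖a‖ ^ 2 ≤ ⟪Z a, a⟫) (hu : ∀ a, ⟪Z a, a⟫ ≤ C * ‖a‖ ^ 2) : ‖Z‖ ≤ C := by
  refine Z.opNorm_le_bound hC fun a => ?_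
  by_cases ha : a = 0
  · simp [ha]
  by_cases hZ : Z a = 0
  · rw [hZ, norm_zero]; positivity
  have ha0 : 0 < ‖a‖ := norm_pos_iff.2 ha
  have hZ0 : 0 < ‖Z a‖ := norm_pos_iff.2 hZ
  -- polarisation with the multiple of `Z a` that has the length of `a`
  set c := (‖a‖ / ‖Z a‖) • Z a with hc
  have hcn : ‖c‖ = ‖a‖ := by
    rw [hc, norm_smul, Real.norm_of_nonneg (by positivity)]; field_simp
  have h1 := hu (a + c)
  have h2 := hl (a - c)
  have e1 : ⟪Z (a + c), a + c⟫ - ⟪Z (a - c), a - c⟫ = 4 * ⟪Z a, c⟫ := by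
    simp only [map_add, map_sub, inner_add_left, inner_add_right, inner_sub_left,
      inner_sub_right]
    rw [hs c a, real_inner_comm (Z a) c]; ring
  have e2 := parallelogram_law_with_norm ℝ a c
  rw [hcn] at e2
  have e3 : ⟪Z a, c⟫ = ‖a‖ * ‖Z a‖ := by
    rw [hc, inner_smul_right, real_inner_self_eq_norm_sq]; field_simp
  have e4 : ‖a + c‖ ^ 2 + ‖a - c‖ ^ 2 = 4 * ‖a‖ ^ 2 := by linarith
  have e5 : ‖a‖ * ‖Z a‖ ≤ ‖a‖ * (C * ‖a‖) := by
    have : C * (‖a + c‖ ^ 2 + ‖a - c‖ ^ 2) = C * (4 * ‖a‖ ^ 2) := by rw [e4]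
    nlinarith
  exact le_of_mul_le_mul_left e5 ha0

/-- `sums_core` applied to `uᵢ(xᵢ + ζ) - uᵢ(xᵢ) - ⟪Pᵢ, ζ⟫` on a small ball: jets of the `uᵢ` within
`η` of `(x, P)` whose Hessians satisfy the required bounds up to errors vanishing with `η`. -/
lemma approx_jets {ι : Type*} [Fintype ι] [DecidableEq ι] {V : ι → Type*}
    [∀ i, NormedAddCommGroup (V i)] [∀ i, InnerProductSpace ℝ (V i)]
    [∀ i, FiniteDimensional ℝ (V i)] {Ω : ∀ i, Set (V i)} (hΩ : ∀ i, IsOpen (Ω i))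
    {u : ∀ i, V i → ℝ} (hu : ∀ i, ContinuousOn (u i) (Ω i)) {x P : PiLp 2 V}
    (hx : ∀ i, x i ∈ Ω i) {X : PiLp 2 V →L[ℝ] PiLp 2 V}
    (hjet : J2plusOp {y : PiLp 2 V | ∀ i, y i ∈ Ω i} (fun y => ∑ i, u i (y i)) x P X)
    {η ε : ℝ} (hη : 0 < η) (hε : 0 < ε) :
    ∃ (z q : PiLp 2 V) (Z : ∀ i, V i →L[ℝ] V i), ‖z‖ < η ∧ ‖q‖ < η ∧
      (∀ i, x i + z i ∈ Ω i ∧ J2plusOp (Ω i) (u i) (x i + z i) (P i + q i) (Z i)) ∧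
      (∀ i ξ, -(1 / ε + ‖X‖ + 2 * η) * ‖ξ‖ ^ 2 ≤ ⟪Z i ξ, ξ⟫) ∧
      (∀ ξ : PiLp 2 V, ∑ i, ⟪Z i (ξ i), ξ i⟫ ≤
        ⟪X ξ, ξ⟫ + η * ‖ξ‖ ^ 2 + ε * ‖X ξ + η • ξ‖ ^ 2 + η * ‖ξ‖ ^ 2) := by
  obtain ⟨hX, hj⟩ := hjet
  obtain ⟨δ, hδ, hj⟩ := hj (η / 2) (by positivity)
  choose ρ' hρ' hball using fun i => Metric.nhds_basis_closedBall.mem_iff.1 ((hΩ i).mem_nhds (hx i))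
  obtain ⟨ρ₁, hρ₁, hle⟩ := exists_pos_le_all hρ'
  set ρ := min ρ₁ (δ / (Fintype.card ι + 2)) with hρdef
  have hρ : 0 < ρ := by positivity
  have hin : ∀ i, ∀ ζ : V i, ‖ζ‖ ≤ ρ → x i + ζ ∈ Ω i := fun i ζ hζ => hball i (by
    simp only [Metric.mem_closedBall, dist_self_add_left]
    exact hζ.trans ((min_le_left _ _).trans (hle i)))
  have hnorm : ∀ z : PiLp 2 V, (∀ i, ‖z i‖ ≤ ρ) → ‖z‖ < δ := by
    intro z hz
    have h1 : ‖z‖ ≤ (Fintype.card ι + 1) * ρ := by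
      refine le_of_sq_le_sq ?_ (by positivity)
      rw [PiLp.norm_sq_eq_of_L2]
      calc ∑ i, ‖z i‖ ^ 2 ≤ ∑ _i : ι, ρ ^ 2 :=
            Finset.sum_le_sum fun i _ => pow_le_pow_left₀ (norm_nonneg _) (hz i) 2
        _ = Fintype.card ι * ρ ^ 2 := by simp
        _ ≤ ((Fintype.card ι + 1) * ρ) ^ 2 := by
          have : (0 : ℝ) ≤ Fintype.card ι := by positivity
          rw [mul_pow]; gcongr; nlinarith
    have h2 : ρ * (Fintype.card ι + 2) ≤ δ :=
      (le_div_iff₀ (by positivity)).1 (min_le_right _ _)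
    linarith
  set v : ∀ i, V i → ℝ := fun i ζ => u i (x i + ζ) - u i (x i) - ⟪P i, ζ⟫ with hv
  have hvc : ∀ i, ContinuousOn (v i) (Metric.closedBall 0 ρ) := fun i => by
    have h1 : ContinuousOn (fun ζ => u i (x i + ζ)) (Metric.closedBall 0 ρ) :=
      (hu i).comp (by fun_prop) fun ζ hζ => hin i ζ (by simpa using hζ)
    exact (h1.sub continuousOn_const).sub (by fun_prop)
  have hvX : ∀ z : PiLp 2 V, (∀ i, z i ∈ Metric.closedBall 0 ρ) →
      ∑ i, v i (z i) ≤ 1 / 2 * ⟪X z, z⟫ + η / 2 * ‖z‖ ^ 2 := by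
    intro z hz
    have hz' : ∀ i, ‖z i‖ ≤ ρ := fun i => by simpa using hz i
    have h1 := hj z (hnorm z hz') fun i => hin i (z i) (hz' i)
    simp only [hv, Finset.sum_sub_distrib]
    rw [PiLp.inner_apply P z] at h1
    simp only [PiLp.add_apply] at h1
    linarith
  obtain ⟨z, q, Z, hz, hq, hs, hjets, hlow, hup⟩ := sums_core hρ hvc (fun i => by simp [hv]) hX
    hη hε hvX (τ := min η ρ) (by positivity)
  refine ⟨z, q, Z, hz.trans_le (min_le_left _ _), hq.trans_le (min_le_left _ _),
    fun i => ⟨hin i _ ((PiLp.norm_apply_le z i).trans (hz.le.trans (min_le_right _ _))),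
      hs i, fun e he => ?_⟩, hlow, hup⟩
  obtain ⟨d, hd, H⟩ := hjets i e he
  refine ⟨d, hd, fun ζ hζ _ => ?_⟩
  have := H ζ hζ
  simp only [hv, inner_add_right, ← add_assoc] at this
  rw [inner_add_left]
  linarith

/-- Theorem on Sums / Ishii's Lemma: with `u(x₁,…,x_k) = ∑ᵢ uᵢ(xᵢ)` on
`Ω̄₁ × ⋯ × Ω̄_k` and `(p₁,…,p_k,X) ∈ J²⁺u(x)` at an interior point `x`, for every `ε > 0`
there exist `Xᵢ ∈ Sym(nᵢ)` with `(pᵢ,Xᵢ) ∈ J̄²⁺uᵢ(xᵢ)` and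
`−(1/ε + ‖X‖) I ≤ diag(X₁,…,X_k) ≤ X + εX²` (as quadratic forms on `ℝᴺ`). -/
theorem stmt_19 {k : ℕ} (n : Fin k → ℕ)
    (Ω : ∀ i, Set (EuclideanSpace ℝ (Fin (n i))))
    (hΩo : ∀ i, IsOpen (Ω i)) (hΩb : ∀ i, Bornology.IsBounded (Ω i))
    (u : ∀ i, EuclideanSpace ℝ (Fin (n i)) → ℝ)
    (hu : ∀ i, ContinuousOn (u i) (closure (Ω i)))
    (x P : PiLp 2 (fun i => EuclideanSpace ℝ (Fin (n i))))
    (hx : ∀ i, x i ∈ Ω i)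
    (X : PiLp 2 (fun i => EuclideanSpace ℝ (Fin (n i))) →L[ℝ]
      PiLp 2 (fun i => EuclideanSpace ℝ (Fin (n i))))
    (hjet : J2plusOp {y : PiLp 2 (fun i => EuclideanSpace ℝ (Fin (n i))) | ∀ i, y i ∈ Ω i}
      (fun y => ∑ i, u i (y i)) x P X) :
    ∀ ε > (0 : ℝ),
      ∃ Xs : ∀ i, EuclideanSpace ℝ (Fin (n i)) →L[ℝ] EuclideanSpace ℝ (Fin (n i)),
        (∀ i, J2plusBarOp (Ω i) (u i) (x i) (P i) (Xs i)) ∧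
        (∀ z : PiLp 2 (fun i => EuclideanSpace ℝ (Fin (n i))),
          -(1 / ε + ‖X‖) * ‖z‖ ^ 2 ≤ ∑ i, ⟪Xs i (z i), z i⟫) ∧
        (∀ z : PiLp 2 (fun i => EuclideanSpace ℝ (Fin (n i))),
          ∑ i, ⟪Xs i (z i), z i⟫ ≤ ⟪X z, z⟫ + ε * ⟪X (X z), z⟫) := by
  classical
  intro ε hε
  have hη : ∀ j : ℕ, (0 : ℝ) < 1 / ((j : ℝ) + 1) := fun j => by positivity
  have hη1 : ∀ j : ℕ, 1 / ((j : ℝ) + 1) ≤ 1 := fun j => by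
    rw [div_le_one (by positivity)]
    linarith [(Nat.cast_nonneg j : (0 : ℝ) ≤ j)]
  have hη0 : Tendsto (fun j : ℕ => 1 / ((j : ℝ) + 1)) atTop (nhds 0) :=
    tendsto_one_div_add_atTop_nhds_zero_nat
  choose a b Z ha hb hZ hlow hup using fun j : ℕ =>
    approx_jets hΩo (fun i => (hu i).mono subset_closure) hx hjet (hη j) hε
  -- the two-sided bounds confine the Hessians to a fixed ball, so that a subsequence converges
  set C : ℝ := 1 / ε + ‖X‖ + 2 + (‖X‖ + 1 + ε * (‖X‖ + 1) ^ 2 + 1) with hC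
  have hε' : 0 < 1 / ε := by positivity
  have hX0 := norm_nonneg X
  have hZC : ∀ j i, ‖Z j i‖ ≤ C := by
    intro j i
    refine opNorm_le_of_quadratic (hZ j i).2.1 (by positivity) (fun ξ => ?_) fun ξ => ?_
    · refine le_trans ?_ (hlow j i ξ)
      have : 1 / ε + ‖X‖ + 2 * (1 / ((j : ℝ) + 1)) ≤ C := by
        have : 0 ≤ ‖X‖ + 1 + ε * (‖X‖ + 1) ^ 2 + 1 := by positivity
        linarith [hη1 j]
      nlinarith [sq_nonneg ‖ξ‖]
    · set w : PiLp 2 (fun i => EuclideanSpace ℝ (Fin (n i))) := PiLp.single 2 i ξ with hw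
      have hwn : ‖w‖ = ‖ξ‖ := by simp [hw]
      have h1 := hup j w
      have h2 : ∑ i', ⟪Z j i' (w i'), w i'⟫ = ⟪Z j i ξ, ξ⟫ := by
        rw [Finset.sum_eq_single i]
        · simp [hw]
        · intro i' _ hne
          simp [hw, hne]
        · simp
      have hXw : ‖X w‖ ≤ ‖X‖ * ‖ξ‖ := hwn ▸ X.le_opNorm w
      have h3 : ⟪X w, w⟫ ≤ ‖X‖ * ‖ξ‖ ^ 2 := by
        refine (real_inner_le_norm _ _).trans ?_
        rw [hwn]; nlinarith [norm_nonneg ξ]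
      have h4 : ‖X w + (1 / ((j : ℝ) + 1)) • w‖ ≤ (‖X‖ + 1) * ‖ξ‖ := by
        refine (norm_add_le _ _).trans ?_
        rw [norm_smul, Real.norm_of_nonneg (hη j).le, hwn]
        nlinarith [norm_nonneg ξ, hη1 j]
      have h5 : ‖X w + (1 / ((j : ℝ) + 1)) • w‖ ^ 2 ≤ (‖X‖ + 1) ^ 2 * ‖ξ‖ ^ 2 := by
        rw [← mul_pow]; exact pow_le_pow_left₀ (norm_nonneg _) h4 2
      rw [h2, hwn] at h1
      have h6 := mul_le_mul_of_nonneg_left h5 hε.le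
      have h7 : 1 / ((j : ℝ) + 1) * ‖ξ‖ ^ 2 ≤ 1 * ‖ξ‖ ^ 2 :=
        mul_le_mul_of_nonneg_right (hη1 j) (sq_nonneg _)
      have h8 : 0 ≤ (1 / ε + ‖X‖ + 1) * ‖ξ‖ ^ 2 := by positivity
      rw [hC]
      nlinarith
  obtain ⟨Xs, -, φ, hφ, hlim⟩ := tendsto_subseq_of_bounded
    (Metric.isBounded_closedBall (x := (0 : ∀ i, EuclideanSpace ℝ (Fin (n i)) →L[ℝ]
      EuclideanSpace ℝ (Fin (n i)))) (r := C)) (x := Z) fun j => by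
        rw [mem_closedBall_zero_iff, pi_norm_le_iff_of_nonneg (by positivity)]
        exact hZC j
  have hηφ := hη0.comp hφ.tendsto_atTop
  have hlim' : ∀ i, Tendsto (fun j => Z (φ j) i) atTop (nhds (Xs i)) :=
    fun i => (tendsto_pi_nhds.1 hlim) i
  have hquad : ∀ i ξ, Tendsto (fun j => ⟪Z (φ j) i ξ, ξ⟫) atTop (nhds ⟪Xs i ξ, ξ⟫) :=
    fun i ξ => (((ContinuousLinearMap.apply ℝ _ ξ).continuous.tendsto _).comp (hlim' i)).inner
      tendsto_const_nhds
  refine ⟨Xs, fun i => ?_, fun z => ?_, fun z => ?_⟩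
  · refine ⟨fun j => x i + a (φ j) i, fun j => P i + b (φ j) i, fun j => Z (φ j) i,
      fun j => hZ (φ j) i, ?_, ?_, hlim' i⟩
    · have : Tendsto (fun j => a (φ j) i) atTop (nhds 0) :=
        squeeze_zero_norm (fun j => (PiLp.norm_apply_le _ i).trans (ha (φ j)).le) hηφ
      simpa using this.const_add (x i)
    · have : Tendsto (fun j => b (φ j) i) atTop (nhds 0) :=
        squeeze_zero_norm (fun j => (PiLp.norm_apply_le _ i).trans (hb (φ j)).le) hηφ
      simpa using this.const_add (P i)
  · rw [PiLp.norm_sq_eq_of_L2, Finset.mul_sum]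
    refine Finset.sum_le_sum fun i _ => ?_
    have hc : Continuous fun t : ℝ => -(1 / ε + ‖X‖ + 2 * t) * ‖z i‖ ^ 2 := by fun_prop
    have h1 := (hc.tendsto 0).comp hηφ
    simp only [mul_zero, add_zero] at h1
    exact le_of_tendsto_of_tendsto' h1 (hquad i (z i)) fun j => hlow (φ j) i (z i)
  · have hc : Continuous fun t : ℝ =>
        ⟪X z, z⟫ + t * ‖z‖ ^ 2 + ε * ‖X z + t • z‖ ^ 2 + t * ‖z‖ ^ 2 := by fun_prop
    have h1 := (hc.tendsto 0).comp hηφ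
    have h2 := le_of_tendsto_of_tendsto' (tendsto_finsetSum Finset.univ fun i _ => hquad i (z i))
      h1 fun j => hup (φ j) z
    have h3 : ⟪X (X z), z⟫ = ‖X z‖ ^ 2 := by
      rw [hjet.1, real_inner_self_eq_norm_sq]
    rw [h3]
    simpa using h2

end
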